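/- arXiv:2403.11471 — 7 statements merged into one kernel-verified Lean document; each statement's English description precedes it below -/
import Mathlib

section
/- Under the standard sonic-point setup, let f(z) := −ε − Az + Bz². Then f(z) < 0 for every z ∈ [−ε/a₁, 0]. -/
open Set

/-!
On `[-ε/a₁, 0]` the quadratic `f` satisfies
`ε f(z) = -(ε + a₁z)(ε - (a₁ - A)z) - (a₁(a₁ - A) - Bε)z²`, so everything reduces to the two
inequalities `A < a₁` and `Bε < a₁(a₁ - A)`. Since `p₀(a₁) = 0`, the second one becomes linear in
`a₁`: with `N = 4k + 1 - ℓ - 2A` it says `N < (k - 2)a₁`. Being the larger root of the monic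
quadratic `p₀`, `a₁` can be compared with a given point through the sign of `p₀` there, and two
test points suffice. If `k ≤ 2ℓ`, then `A > 2` and `p₀(A) = kε(2 - A) < 0`, so `A < a₁`; for
`2 ≤ k ≤ 2ℓ` one also has `N < (k - 2)A`, which settles the second inequality. In the remaining
cases take the test point `N/(k - 2)`: the value of `p₀` there is positive for `0 < k < 2` and
negative for `k > 2ℓ`. Finally, `B > 0` for `k > 2ℓ`, so there the second inequality implies the
first.
-/

section Quadratic

variable {b c x : ℝ}

/-- The larger root of `x² - bx + c`. If the discriminant is negative, the value is `b / 2`. -/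
noncomputable def largerRoot (b c : ℝ) : ℝ := (b + √(b ^ 2 - 4 * c)) / 2

theorem quadratic_largerRoot_eq_zero (h : 4 * c ≤ b ^ 2) :
    largerRoot b c ^ 2 - b * largerRoot b c + c = 0 := by
  have hsq : √(b ^ 2 - 4 * c) ^ 2 = b ^ 2 - 4 * c := Real.sq_sqrt (sub_nonneg.2 h)
  unfold largerRoot
  linear_combination hsq / 4

theorem lt_largerRoot_of_neg (h : x ^ 2 - b * x + c < 0) : x < largerRoot b c := by
  have : 2 * x - b < √(b ^ 2 - 4 * c) := Real.lt_sqrt_of_sq_lt (by linarith)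
  unfold largerRoot
  linarith

theorem largerRoot_lt_of_pos (hx : b < 2 * x) (h : 0 < x ^ 2 - b * x + c) :
    largerRoot b c < x := by
  have : √(b ^ 2 - 4 * c) < 2 * x - b := (Real.sqrt_lt' (sub_pos.2 hx)).2 (by linarith)
  unfold largerRoot
  linarith

-- The hypothesis `hB` says that the quadratic is negative at the endpoint `-ε / a`.
theorem quadratic_neg_of_mem_Icc {ε A B a z : ℝ} (hε : 0 < ε) (ha : 0 < a) (hA : A ≤ a)
    (hB : B * ε < a * (a - A)) (hz : z ∈ Icc (-(ε / a)) 0) : -ε - A * z + B * z ^ 2 < 0 := by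
  obtain ⟨hz_left, hz_right⟩ := hz
  rcases hz_right.eq_or_lt with rfl | hz_neg
  · simpa using hε
  have h_left : 0 ≤ ε + a * z := by
    rw [neg_le, le_div_iff₀ ha] at hz_left
    linarith
  have h_right : 0 < ε - (a - A) * z := by
    linarith [mul_nonneg (sub_nonneg.2 hA) (neg_nonneg.2 hz_right)]
  refine neg_of_mul_neg_right (a := ε) ?_ hε.le
  calc ε * (-ε - A * z + B * z ^ 2)
      = -((ε + a * z) * (ε - (a - A) * z)) - (a * (a - A) - B * ε) * z ^ 2 := by ring
    _ < 0 := by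
      linarith [mul_nonneg h_left h_right.le, mul_pos (sub_pos.2 hB) (pow_pos (neg_pos.2 hz_neg) 2)]

end Quadratic

namespace SonicPoint

/-- The parameter `ε = ℓγ² - 1` of the sonic-point setup. -/
def eps (ℓ γ : ℝ) : ℝ := ℓ * γ ^ 2 - 1

/-- The parameter `A` of the sonic-point setup, for real `k`. -/
def coeffA (k ℓ γ : ℝ) : ℝ := k + 2 - (k - 2 * ℓ) * γ

/-- The parameter `B` of the sonic-point setup, for real `k`. -/
def coeffB (k ℓ : ℝ) : ℝ := 2 * k + 1 - ℓ

/-- The quadratic `p₀` of the sonic-point setup. -/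
def p₀ (k ℓ γ x : ℝ) : ℝ :=
  x ^ 2 - ((k - 2) * eps ℓ γ + coeffA k ℓ γ) * x + 2 * (k - coeffA k ℓ γ) * eps ℓ γ

/-- The larger root `a₁` of `p₀`. -/
noncomputable def a₁ (k ℓ γ : ℝ) : ℝ :=
  largerRoot ((k - 2) * eps ℓ γ + coeffA k ℓ γ) (2 * (k - coeffA k ℓ γ) * eps ℓ γ)

/-- The constant `N` for which every root `a` of `p₀` satisfies
`a(a - A) - Bε = ε((k - 2)a - N)`. -/
def threshold (k ℓ γ : ℝ) : ℝ := 4 * k + 1 - ℓ - 2 * coeffA k ℓ γ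

variable {k ℓ γ : ℝ}

theorem eps_pos (hℓ : 0 < ℓ) (hγ : 1 / √ℓ < γ) : 0 < eps ℓ γ := by
  have h : 1 < γ * √ℓ := (div_lt_iff₀ (Real.sqrt_pos.2 hℓ)).1 hγ
  have h_sq : 1 < (γ * √ℓ) ^ 2 := one_lt_pow₀ h two_ne_zero
  rw [mul_pow, Real.sq_sqrt hℓ.le] at h_sq
  unfold eps
  linarith

theorem p₀_coeffA (k ℓ γ : ℝ) :
    p₀ k ℓ γ (coeffA k ℓ γ) = k * eps ℓ γ * (2 - coeffA k ℓ γ) := by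
  unfold p₀
  ring

theorem two_lt_coeffA (hk : 0 < k) (hkℓ : k ≤ 2 * ℓ) (hγ : 0 ≤ γ) : 2 < coeffA k ℓ γ := by
  unfold coeffA
  linarith [mul_nonneg (sub_nonneg.2 hkℓ) hγ]

theorem p₀_coeffA_neg (hk : 0 < k) (hkℓ : k ≤ 2 * ℓ) (hγ : 0 ≤ γ) (hε : 0 < eps ℓ γ) :
    p₀ k ℓ γ (coeffA k ℓ γ) < 0 := by
  rw [p₀_coeffA]
  exact mul_neg_of_pos_of_neg (mul_pos hk hε) (sub_neg.2 (two_lt_coeffA hk hkℓ hγ))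

theorem sq_mul_p₀_threshold_div (hk : k ≠ 2) :
    (k - 2) ^ 2 * p₀ k ℓ γ (threshold k ℓ γ / (k - 2)) =
      (ℓ - 1) * ((2 * k * (2 - k) * (k + 2) + 8 * k * (ℓ - 1) + (2 - k) ^ 2 * ℓ) * γ ^ 2
        + (k + 2) * (2 * ℓ - k) * γ + (ℓ - 1)) := by
  have hk' : k - 2 ≠ 0 := sub_ne_zero.2 hk
  unfold p₀ threshold coeffA eps
  field_simp
  ring

theorem p₀_threshold_div_pos (hk : 0 < k) (hk2 : k < 2) (hℓ : 1 < ℓ) (hγ : 0 < γ) :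
    0 < p₀ k ℓ γ (threshold k ℓ γ / (k - 2)) := by
  have : 0 < 2 - k := sub_pos.2 hk2
  have : 0 < ℓ - 1 := sub_pos.2 hℓ
  have : 0 < 2 * ℓ - k := by linarith
  refine pos_of_mul_pos_right (a := (k - 2) ^ 2) ?_ (sq_nonneg _)
  rw [sq_mul_p₀_threshold_div hk2.ne]
  positivity

theorem p₀_threshold_div_neg (hkℓ : 2 * ℓ < k) (hℓ : 1 < ℓ) (hγ : 0 < γ) (hε : 0 < eps ℓ γ) :
    p₀ k ℓ γ (threshold k ℓ γ / (k - 2)) < 0 := by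
  have hℓ' : 0 < ℓ - 1 := sub_pos.2 hℓ
  have hkℓ' : 0 < k - 2 * ℓ := sub_pos.2 hkℓ
  have h_lead : 2 * k * (2 - k) * (k + 2) + 8 * k * (ℓ - 1) + (2 - k) ^ 2 * ℓ
      + (ℓ - 1) * ℓ < 0 := by
    obtain ⟨d, rfl⟩ : ∃ d, ℓ = d + 1 := ⟨ℓ - 1, by ring⟩
    obtain ⟨t, rfl⟩ : ∃ t, k = t + 2 * (d + 1) := ⟨k - 2 * (d + 1), by ring⟩
    have hd : 0 < d := by linarith
    have ht : 0 < t := by linarith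
    rw [← neg_pos]
    ring_nf
    positivity
  -- `1 < ℓγ²` absorbs the constant term `ℓ - 1` into the leading one.
  have h_const : ℓ - 1 < (ℓ - 1) * ℓ * γ ^ 2 := by
    unfold eps at hε
    linarith [mul_pos hℓ' hε]
  refine neg_of_mul_neg_right (a := (k - 2) ^ 2) ?_ (sq_nonneg _)
  rw [sq_mul_p₀_threshold_div (by linarith)]
  refine mul_neg_of_pos_of_neg hℓ' ?_
  linarith [mul_neg_of_neg_of_pos h_lead (pow_pos hγ 2),
    mul_pos (mul_pos (by linarith : 0 < k + 2) hkℓ') hγ]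

theorem threshold_lt_mul_coeffA (hk : 2 ≤ k) (hkℓ : k ≤ 2 * ℓ) (hℓ : 1 < ℓ) (hγ : 0 ≤ γ) :
    threshold k ℓ γ < (k - 2) * coeffA k ℓ γ := by
  have h_eq : (k - 2) * coeffA k ℓ γ - threshold k ℓ γ =
      k * ((2 * ℓ - k) * γ) + k * (k - 2) + (ℓ - 1) := by
    unfold threshold coeffA
    ring
  have : 0 ≤ k - 2 := sub_nonneg.2 hk
  have : 0 ≤ 2 * ℓ - k := sub_nonneg.2 hkℓ
  have : 0 ≤ k * ((2 * ℓ - k) * γ) + k * (k - 2) := by positivity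
  linarith

theorem threshold_pos (hkℓ : 2 * ℓ < k) (hℓ : 1 < ℓ) (hγ : 0 ≤ γ) : 0 < threshold k ℓ γ := by
  unfold threshold coeffA
  linarith [mul_nonneg (sub_pos.2 hkℓ).le hγ]

theorem exists_pos_p₀_neg (hk : 0 < k) (hℓ : 1 < ℓ) (hγ : 0 < γ) (hε : 0 < eps ℓ γ) :
    ∃ x, 0 < x ∧ p₀ k ℓ γ x < 0 := by
  rcases le_or_gt k (2 * ℓ) with hkℓ | hkℓ
  · exact ⟨coeffA k ℓ γ, two_pos.trans (two_lt_coeffA hk hkℓ hγ.le),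
      p₀_coeffA_neg hk hkℓ hγ.le hε⟩
  · exact ⟨threshold k ℓ γ / (k - 2), div_pos (threshold_pos hkℓ hℓ hγ.le) (by linarith),
      p₀_threshold_div_neg hkℓ hℓ hγ hε⟩

theorem a₁_pos (hk : 0 < k) (hℓ : 1 < ℓ) (hγ : 0 < γ) (hε : 0 < eps ℓ γ) : 0 < a₁ k ℓ γ := by
  obtain ⟨x, hx, hx_neg⟩ := exists_pos_p₀_neg hk hℓ hγ hε
  exact hx.trans (lt_largerRoot_of_neg hx_neg)

theorem p₀_a₁ (hk : 0 < k) (hℓ : 1 < ℓ) (hγ : 0 < γ) (hε : 0 < eps ℓ γ) :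
    p₀ k ℓ γ (a₁ k ℓ γ) = 0 := by
  obtain ⟨x, -, hx_neg⟩ := exists_pos_p₀_neg hk hℓ hγ hε
  unfold p₀ at hx_neg
  refine quadratic_largerRoot_eq_zero ?_
  linarith [sq_nonneg (2 * x - ((k - 2) * eps ℓ γ + coeffA k ℓ γ))]

theorem a₁_lt_threshold_div (hk : 0 < k) (hk2 : k < 2) (hℓ : 1 < ℓ) (hγ : 0 < γ)
    (hε : 0 < eps ℓ γ) : a₁ k ℓ γ < threshold k ℓ γ / (k - 2) := by
  refine largerRoot_lt_of_pos ?_ (p₀_threshold_div_pos hk hk2 hℓ hγ)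
  have : 0 < 2 - k := sub_pos.2 hk2
  have : 0 < 2 * ℓ - k := by linarith
  have h_eq : (2 - k) * ((k - 2) * eps ℓ γ + coeffA k ℓ γ) + 2 * threshold k ℓ γ =
      -((2 - k) ^ 2 * eps ℓ γ + (k + 2) * ((2 * ℓ - k) * γ) + (2 - k) ^ 2 + 2 * (ℓ - 1)) := by
    unfold threshold coeffA
    ring
  have : 0 < (2 - k) ^ 2 * eps ℓ γ + (k + 2) * ((2 * ℓ - k) * γ) + (2 - k) ^ 2 := by positivity
  rw [← mul_div_assoc, lt_div_iff_of_neg (sub_neg.2 hk2)]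
  linarith

theorem threshold_lt_mul_a₁ (hk : 0 < k) (hℓ : 1 < ℓ) (hγ : 0 < γ) (hε : 0 < eps ℓ γ) :
    threshold k ℓ γ < (k - 2) * a₁ k ℓ γ := by
  rcases lt_or_ge k 2 with hk2 | hk2
  · have h := a₁_lt_threshold_div hk hk2 hℓ hγ hε
    rwa [lt_div_iff_of_neg (sub_neg.2 hk2), mul_comm] at h
  rcases le_or_gt k (2 * ℓ) with hkℓ | hkℓ
  · calc threshold k ℓ γ < (k - 2) * coeffA k ℓ γ := threshold_lt_mul_coeffA hk2 hkℓ hℓ hγ.le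
      _ ≤ (k - 2) * a₁ k ℓ γ := mul_le_mul_of_nonneg_left
        (lt_largerRoot_of_neg (p₀_coeffA_neg hk hkℓ hγ.le hε)).le (sub_nonneg.2 hk2)
  · have h : threshold k ℓ γ / (k - 2) < a₁ k ℓ γ :=
      lt_largerRoot_of_neg (p₀_threshold_div_neg hkℓ hℓ hγ hε)
    rwa [div_lt_iff₀' (by linarith)] at h

theorem coeffB_mul_eps_lt (hk : 0 < k) (hℓ : 1 < ℓ) (hγ : 0 < γ) (hε : 0 < eps ℓ γ) :
    coeffB k ℓ * eps ℓ γ < a₁ k ℓ γ * (a₁ k ℓ γ - coeffA k ℓ γ) := by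
  have h_root := p₀_a₁ hk hℓ hγ hε
  have h_eq : a₁ k ℓ γ * (a₁ k ℓ γ - coeffA k ℓ γ) - coeffB k ℓ * eps ℓ γ =
      eps ℓ γ * ((k - 2) * a₁ k ℓ γ - threshold k ℓ γ) := by
    unfold p₀ at h_root
    unfold threshold coeffB
    linear_combination h_root
  rw [← sub_pos, h_eq]
  exact mul_pos hε (sub_pos.2 (threshold_lt_mul_a₁ hk hℓ hγ hε))

theorem coeffA_lt_a₁ (hk : 0 < k) (hℓ : 1 < ℓ) (hγ : 0 < γ) (hε : 0 < eps ℓ γ) :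
    coeffA k ℓ γ < a₁ k ℓ γ := by
  rcases le_or_gt k (2 * ℓ) with hkℓ | hkℓ
  · exact lt_largerRoot_of_neg (p₀_coeffA_neg hk hkℓ hγ.le hε)
  · have hB : 0 < coeffB k ℓ := by unfold coeffB; linarith
    have h := (mul_pos hB hε).trans (coeffB_mul_eps_lt hk hℓ hγ hε)
    exact sub_pos.1 (pos_of_mul_pos_right h (a₁_pos hk hℓ hγ hε).le)

end SonicPoint

open SonicPoint in
theorem f_neg_on_interval_general {k ℓ γ : ℝ} (hk : 0 < k) (hℓ : 1 < ℓ) (hγ : 1 / √ℓ < γ) :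
    ∀ z ∈ Icc (-(eps ℓ γ / a₁ k ℓ γ)) 0,
      -eps ℓ γ - coeffA k ℓ γ * z + coeffB k ℓ * z ^ 2 < 0 := by
  intro z hz
  have hγ_pos : 0 < γ := lt_of_le_of_lt (by positivity) hγ
  have hε : 0 < eps ℓ γ := eps_pos (one_pos.trans hℓ) hγ
  exact quadratic_neg_of_mem_Icc hε (a₁_pos hk hℓ hγ_pos hε) (coeffA_lt_a₁ hk hℓ hγ_pos hε).le
    (coeffB_mul_eps_lt hk hℓ hγ_pos hε) hz

/-- Negativity of `f(z) = −ε − Az + Bz²` on the interval `[−ε/a₁, 0]`. -/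
theorem f_neg_on_interval
    (k : ℕ) (hk : 1 ≤ k) (ℓ γ ε A B a₁ δ R : ℝ)
    (hℓ : 1 < ℓ) (hγ : 1 / Real.sqrt ℓ < γ)
    (hε : ε = ℓ * γ ^ 2 - 1) (hεpos : 0 < ε)
    (hA : A = (k : ℝ) + 2 - ((k : ℝ) - 2 * ℓ) * γ)
    (hB : B = 2 * (k : ℝ) + 1 - ℓ)
    (hdisc : 0 < (((k : ℝ) - 2) * ε + A) ^ 2 - 8 * ((k : ℝ) - A) * ε)
    (ha₁ : a₁ = ((((k : ℝ) - 2) * ε + A)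
        + Real.sqrt ((((k : ℝ) - 2) * ε + A) ^ 2 - 8 * ((k : ℝ) - A) * ε)) / 2)
    (hδ : δ = A + (k : ℝ) * ε - a₁) (hδpos : 0 < δ)
    (hR : R = (a₁ + 2 * ε) / δ) (hR1 : 1 < R)
    (hRδ : R * δ = a₁ + 2 * ε)
    (hR1δ : (R + 1) * δ = ((k : ℝ) + 2) * ε + A)
    (hRδ2 : R * δ ^ 2 = 2 * (k : ℝ) * ε * (1 + ε))
    : ∀ z ∈ Icc (-(ε / a₁)) (0 : ℝ), -ε - A * z + B * z ^ 2 < 0 := by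
  have h_root : a₁ = largerRoot (((k : ℝ) - 2) * ε + A) (2 * ((k : ℝ) - A) * ε) := by
    rw [ha₁, largerRoot, ← mul_assoc, ← mul_assoc]
    norm_num
  rw [h_root, hε, hA, hB]
  exact f_neg_on_interval_general (Nat.cast_pos.2 hk) hℓ hγ
end

section
/- Let k > 0, ℓ > 1 and γ > 1/√ℓ be reals; set ε := ℓγ² − 1, A := k + 2 − (k − 2ℓ)γ, B := 2k + 1 − ℓ, u_g(z) := ℓ(z + γ)² − (1 − z)² and z_g := (1 − √ℓ·γ)/(√ℓ + 1). Then for every real z: −Δ_z(z, u_g(z)) = −kz(z + γ)·((ℓ+1)z + ℓγ − 1) and 𝓛(u_g)(z) = 2kℓ(1 − ℓ)·z·(z + γ)³; consequently 𝓛(u_g)(z) > 0 and Δ_z(z, u_g(z)) < 0 for every z ∈ [z_g, 0). -/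
/-!
Put `a = z + γ` and `b = 1 - z`. The constants `ε`, `A`, `B` are such that
`f + u_g = k z (a - b)`. With this, both components of the field are divisible by `k z a` along
`u = u_g`: `Δ_z = k z a (ℓ a - b)` and `Δ_u = 2 k z a u_g`. Since `u_g = ℓ a² - b²` and
`u_g' = 2 (ℓ a + b)`, the remaining factor of `𝓛(u_g)` is
`2 (ℓ a² - b²) - 2 (ℓ a - b) (ℓ a + b) = 2 ℓ (1 - ℓ) a²`. For the signs, `z_g` is the point where
`b = √ℓ a`, so `z_g ≤ z < 0` gives `0 < b ≤ √ℓ a < ℓ a`.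
-/

open Set

section CommRing

variable {R : Type*} [CommRing R]

/-- The sonic curve `u_g` with parameters `ℓ` and `γ`. -/
def sonicCurve (ℓ γ z : R) : R :=
  ℓ * (z + γ) ^ 2 - (1 - z) ^ 2

/-- The `z`-component `Δ_z` of the phase-plane field, for an arbitrary function `f`. -/
def fieldZ (k : R) (f : R → R) (z u : R) : R :=
  ((k + 1) * z - 1) * u + (z - 1) * f z

/-- The `u`-component `Δ_u` of the phase-plane field, for an arbitrary function `f`. -/
def fieldU (k : R) (f : R → R) (z u : R) : R :=
  2 * u * (u + f z + k * z * (1 - z))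

lemma quadratic_add_sonicCurve (k ℓ γ z : R) :
    -(ℓ * γ ^ 2 - 1) - (k + 2 - (k - 2 * ℓ) * γ) * z + (2 * k + 1 - ℓ) * z ^ 2 +
      sonicCurve ℓ γ z = k * z * ((z + γ) - (1 - z)) := by
  unfold sonicCurve
  ring

variable {k ℓ γ z : R} {f : R → R}

lemma fieldZ_sonicCurve (hf : f z + sonicCurve ℓ γ z = k * z * ((z + γ) - (1 - z))) :
    fieldZ k f z (sonicCurve ℓ γ z) = k * z * (z + γ) * (ℓ * (z + γ) - (1 - z)) :=
  calc
    fieldZ k f z (sonicCurve ℓ γ z)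
      = k * z * sonicCurve ℓ γ z - (1 - z) * (f z + sonicCurve ℓ γ z) := by
        unfold fieldZ
        ring
    _ = k * z * (z + γ) * (ℓ * (z + γ) - (1 - z)) := by
        rw [hf, sonicCurve]
        ring

lemma fieldU_sonicCurve (hf : f z + sonicCurve ℓ γ z = k * z * ((z + γ) - (1 - z))) :
    fieldU k f z (sonicCurve ℓ γ z) = 2 * k * z * (z + γ) * sonicCurve ℓ γ z := by
  rw [fieldU, add_comm (sonicCurve ℓ γ z), hf]
  ring

end CommRing

section Transversality

variable {𝕜 : Type*} [NontriviallyNormedField 𝕜]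

/-- The operator `𝓛` of a planar field `(Δz, Δu)`: the rate of change of `u - v z` along the field,
at the point of the graph of `v` over `z`. As `deriv` is `0` where `v` is not differentiable, it has
this meaning only for differentiable `v`. -/
noncomputable def graphTransversality (Δz Δu : 𝕜 → 𝕜 → 𝕜) (v : 𝕜 → 𝕜) (z : 𝕜) : 𝕜 :=
  -(Δz z (v z)) * deriv v z + Δu z (v z)

lemma hasDerivAt_sonicCurve (ℓ γ z : 𝕜) :
    HasDerivAt (sonicCurve ℓ γ) (2 * (ℓ * (z + γ) + (1 - z))) z := by
  have hadd : HasDerivAt (fun x ↦ x + γ) 1 z := (hasDerivAt_id z).add_const γ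
  have hsub : HasDerivAt (fun x ↦ 1 - x) (-1) z := (hasDerivAt_id z).const_sub 1
  refine (((hadd.pow 2).const_mul ℓ).sub (hsub.pow 2)).congr_deriv ?_
  push_cast
  ring

lemma graphTransversality_sonicCurve {k ℓ γ z : 𝕜} {f : 𝕜 → 𝕜}
    (hf : f z + sonicCurve ℓ γ z = k * z * ((z + γ) - (1 - z))) :
    graphTransversality (fieldZ k f) (fieldU k f) (sonicCurve ℓ γ) z =
      2 * k * ℓ * (1 - ℓ) * z * (z + γ) ^ 3 := by
  rw [graphTransversality, (hasDerivAt_sonicCurve ℓ γ z).deriv, fieldZ_sonicCurve hf,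
    fieldU_sonicCurve hf, sonicCurve]
  ring

end Transversality

section Signs

/-- The point `z_g` where `1 - z = √ℓ * (z + γ)`; for `0 ≤ ℓ` it is a zero of the sonic curve. -/
noncomputable def sonicZero (ℓ γ : ℝ) : ℝ :=
  (1 - √ℓ * γ) / (√ℓ + 1)

variable {k ℓ γ z : ℝ} {f : ℝ → ℝ}

lemma sonicZero_le_iff : sonicZero ℓ γ ≤ z ↔ 1 - z ≤ √ℓ * (z + γ) := by
  rw [sonicZero, div_le_iff₀ (by positivity)]
  constructor <;> intro h <;> linarith

lemma add_pos_of_sonicZero_le (hz : sonicZero ℓ γ ≤ z) (hz1 : z < 1) : 0 < z + γ :=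
  pos_of_mul_pos_right ((sub_pos.2 hz1).trans_le (sonicZero_le_iff.1 hz)) (Real.sqrt_nonneg ℓ)

lemma one_sub_lt_mul_add_of_sonicZero_le (hℓ : 1 < ℓ) (hz : sonicZero ℓ γ ≤ z) (hz1 : z < 1) :
    1 - z < ℓ * (z + γ) :=
  calc
    1 - z ≤ √ℓ * (z + γ) := sonicZero_le_iff.1 hz
    _ < ℓ * (z + γ) :=
      mul_lt_mul_of_pos_right (Real.sqrt_lt_self_iff.2 hℓ) (add_pos_of_sonicZero_le hz hz1)

lemma fieldZ_sonicCurve_neg (hf : f z + sonicCurve ℓ γ z = k * z * ((z + γ) - (1 - z)))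
    (hk : 0 < k) (hℓ : 1 < ℓ) (hz : z ∈ Ico (sonicZero ℓ γ) 0) :
    fieldZ k f z (sonicCurve ℓ γ z) < 0 := by
  have hz1 : z < 1 := hz.2.trans one_pos
  rw [fieldZ_sonicCurve hf]
  exact mul_neg_of_neg_of_pos
    (mul_neg_of_neg_of_pos (mul_neg_of_pos_of_neg hk hz.2) (add_pos_of_sonicZero_le hz.1 hz1))
    (sub_pos.2 (one_sub_lt_mul_add_of_sonicZero_le hℓ hz.1 hz1))

lemma graphTransversality_sonicCurve_pos
    (hf : f z + sonicCurve ℓ γ z = k * z * ((z + γ) - (1 - z)))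
    (hk : 0 < k) (hℓ : 1 < ℓ) (hz : z ∈ Ico (sonicZero ℓ γ) 0) :
    0 < graphTransversality (fieldZ k f) (fieldU k f) (sonicCurve ℓ γ) z := by
  have hcoeff : 2 * k * ℓ * (1 - ℓ) < 0 :=
    mul_neg_of_pos_of_neg (by positivity) (sub_neg.2 hℓ)
  have hadd : 0 < z + γ := add_pos_of_sonicZero_le hz.1 (hz.2.trans one_pos)
  rw [graphTransversality_sonicCurve hf]
  exact mul_pos (mul_pos_of_neg_of_neg hcoeff hz.2) (pow_pos hadd 3)

end Signs

/-- The barrier computation on the sonic curve `u = u_g(z)`: explicit formulas for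
`−Δ_z(z, u_g(z))` and `𝓛(u_g)(z)`, and the resulting signs on `[z_g, 0)`. -/
theorem ug_barrier_computation (k ℓ γ : ℝ) (hk : 0 < k) (hℓ : 1 < ℓ)
    (hγ : 1 / Real.sqrt ℓ < γ)
    (ε A B zg : ℝ)
    (hε : ε = ℓ * γ ^ 2 - 1)
    (hA : A = k + 2 - (k - 2 * ℓ) * γ)
    (hB : B = 2 * k + 1 - ℓ)
    (hzg : zg = (1 - Real.sqrt ℓ * γ) / (Real.sqrt ℓ + 1))
    (f ug : ℝ → ℝ)
    (hf : ∀ z : ℝ, f z = -ε - A * z + B * z ^ 2)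
    (hug : ∀ z : ℝ, ug z = ℓ * (z + γ) ^ 2 - (1 - z) ^ 2)
    (Δz Δu : ℝ → ℝ → ℝ)
    (hΔz : ∀ z u : ℝ, Δz z u = ((k + 1) * z - 1) * u + (z - 1) * f z)
    (hΔu : ∀ z u : ℝ, Δu z u = 2 * u * (u + f z + k * z * (1 - z)))
    (L : ℝ → ℝ)
    (hL : ∀ z : ℝ, L z = -(Δz z (ug z)) * deriv ug z + Δu z (ug z)) :
    (∀ z : ℝ,
      -(Δz z (ug z)) = -(k * z * (z + γ) * ((ℓ + 1) * z + ℓ * γ - 1)) ∧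
      L z = 2 * k * ℓ * (1 - ℓ) * z * (z + γ) ^ 3) ∧
    (∀ z ∈ Ico zg (0 : ℝ), 0 < L z ∧ Δz z (ug z) < 0) := by
  subst hε hA hB
  obtain rfl : zg = sonicZero ℓ γ := hzg
  obtain rfl : ug = sonicCurve ℓ γ := funext hug
  obtain rfl : Δz = fieldZ k f := funext₂ hΔz
  obtain rfl : Δu = fieldU k f := funext₂ hΔu
  obtain rfl : L = graphTransversality (fieldZ k f) (fieldU k f) (sonicCurve ℓ γ) := funext hL
  have hsum (z : ℝ) : f z + sonicCurve ℓ γ z = k * z * ((z + γ) - (1 - z)) := by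
    rw [hf, quadratic_add_sonicCurve]
  refine ⟨fun z ↦ ⟨?_, graphTransversality_sonicCurve (hsum z)⟩, fun z hz ↦
    ⟨graphTransversality_sonicCurve_pos (hsum z) hk hℓ hz,
      fieldZ_sonicCurve_neg (hsum z) hk hℓ hz⟩⟩
  rw [fieldZ_sonicCurve (hsum z)]
  ring
end

section
/- Under the standard sonic-point setup with higher Taylor coefficients, let u_g(z) := ℓ(z + γ)² − (1 − z)² and z_g := (1 − √ℓ·γ)/(√ℓ + 1). Then: (i) u_g(z) > ε + a₁z for every z < 0; (ii) −γ < z_g < −ε/a₁; (iii) if a₂ > 0 and a₃ > 0, then ε + a₁z < ε + a₁z + a₂z² + a₃z³ for every z ∈ (−a₂/a₃, 0), and ε + a₁z ≥ ε + a₁z + a₂z² + a₃z³ for every z ≤ −a₂/a₃. -/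
open Set

/-!
Both `u_g` and the line `u_(1)` take the value `ε` at `0`, and `u_g` is convex, so `u_g` lies above
`u_(1)` to the left of `0` as soon as its slope there, `2ℓγ + 2`, is less than `a₁`. This holds
because `p₀` takes the negative value `-2kℓ(ℓ - 1)γ³` at `2ℓγ + 2`, while `a₁` is its larger root.
The point `z_g < 0` is a zero of `u_g`, so `u_(1)` is negative there: `z_g` lies to the left of the
zero `-ε/a₁` of `u_(1)`. Finally, `u_(3) - u_(1) = z²(a₂ + a₃z)` changes sign at `-a₂/a₃`.
-/

theorem lt_larger_root_of_quadratic_neg {a b c t : ℝ} (ha : 0 < a)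
    (ht : a * t ^ 2 + b * t + c < 0) : t < (-b + √(discrim a b c)) / (2 * a) := by
  have complete_square : (2 * a * t + b) ^ 2 = 4 * a * (a * t ^ 2 + b * t + c) + discrim a b c := by
    rw [discrim]
    ring
  have sq_lt : (2 * a * t + b) ^ 2 < discrim a b c := by
    linarith [mul_neg_of_pos_of_neg (by positivity : 0 < 4 * a) ht]
  rw [lt_div_iff₀ (by positivity)]
  linarith [Real.lt_sqrt_of_sq_lt sq_lt]

section Cubic

variable {K : Type*} [Field K] [LinearOrder K] [IsStrictOrderedRing K] {b c z : K}

theorem quadratic_add_cubic_pos_iff (hc : 0 < c) :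
    0 < b * z ^ 2 + c * z ^ 3 ↔ z ≠ 0 ∧ -(b / c) < z := by
  have factor : b * z ^ 2 + c * z ^ 3 = z ^ 2 * (b + c * z) := by ring
  rcases eq_or_ne z 0 with rfl | hz
  · simp
  · rw [factor, mul_pos_iff_of_pos_left (by positivity), ← neg_div, div_lt_iff₀' hc,
      neg_lt_iff_pos_add']
    exact (and_iff_right hz).symm

theorem quadratic_add_cubic_nonpos (hc : 0 < c) (hz : z ≤ -(b / c)) :
    b * z ^ 2 + c * z ^ 3 ≤ 0 :=
  not_lt.mp fun hpos ↦ ((quadratic_add_cubic_pos_iff hc).mp hpos).2.not_ge hz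

end Cubic

/-- The barrier function `u_g`, parametrized by `ℓ` and `γ`. -/
def gBarrier (ℓ γ z : ℝ) : ℝ := ℓ * (z + γ) ^ 2 - (1 - z) ^ 2

/-- The zero `z_g` of the barrier function `u_g` at which `√ℓ (z + γ) = 1 - z`. -/
noncomputable def gBarrierRoot (ℓ γ : ℝ) : ℝ := (1 - √ℓ * γ) / (√ℓ + 1)

/-- The quadratic `p₀`, satisfied by the first Taylor coefficient `a₁` at the sonic point. -/
def sonicQuadratic (k A ε x : ℝ) : ℝ := x ^ 2 - ((k - 2) * ε + A) * x + 2 * (k - A) * ε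

/-- The slope `a₁` at the sonic point: the larger root of `p₀`, provided that the discriminant
is nonnegative. -/
noncomputable def sonicSlope (k A ε : ℝ) : ℝ :=
  (((k - 2) * ε + A) + √(((k - 2) * ε + A) ^ 2 - 8 * (k - A) * ε)) / 2

theorem lt_sonicSlope_of_sonicQuadratic_neg {k A ε t : ℝ} (ht : sonicQuadratic k A ε t < 0) :
    t < sonicSlope k A ε := by
  have lt_root : t < (-(-((k - 2) * ε + A)) +
      √(discrim 1 (-((k - 2) * ε + A)) (2 * (k - A) * ε))) / (2 * 1) := by
    apply lt_larger_root_of_quadratic_neg one_pos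
    rw [sonicQuadratic] at ht
    linarith
  have discrim_eq : discrim 1 (-((k - 2) * ε + A)) (2 * (k - A) * ε) =
      ((k - 2) * ε + A) ^ 2 - 8 * (k - A) * ε := by
    rw [discrim]
    ring
  rwa [discrim_eq, neg_neg, mul_one] at lt_root

theorem sonicQuadratic_two_mul_mul_add_two (k ℓ γ : ℝ) :
    sonicQuadratic k (k + 2 - (k - 2 * ℓ) * γ) (ℓ * γ ^ 2 - 1) (2 * ℓ * γ + 2) =
      -(2 * k * ℓ * (ℓ - 1) * γ ^ 3) := by
  rw [sonicQuadratic]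
  ring

theorem gBarrier_eq (ℓ γ z : ℝ) :
    gBarrier ℓ γ z = (ℓ * γ ^ 2 - 1) + (2 * ℓ * γ + 2) * z + (ℓ - 1) * z ^ 2 := by
  rw [gBarrier]
  ring

section Barrier

variable {k ℓ γ : ℝ}

theorem two_mul_mul_add_two_lt_sonicSlope (hk : 0 < k) (hℓ : 1 < ℓ) (hγ : 0 < γ) :
    2 * ℓ * γ + 2 < sonicSlope k (k + 2 - (k - 2 * ℓ) * γ) (ℓ * γ ^ 2 - 1) := by
  apply lt_sonicSlope_of_sonicQuadratic_neg
  rw [sonicQuadratic_two_mul_mul_add_two, neg_lt_zero]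
  have : 0 < ℓ - 1 := sub_pos.mpr hℓ
  positivity

theorem line_lt_gBarrier {a z : ℝ} (hℓ : 1 ≤ ℓ) (ha : 2 * ℓ * γ + 2 < a) (hz : z < 0) :
    (ℓ * γ ^ 2 - 1) + a * z < gBarrier ℓ γ z := by
  have tangent_gap : a * z < (2 * ℓ * γ + 2) * z := mul_lt_mul_of_neg_right ha hz
  have convexity_gap : 0 ≤ (ℓ - 1) * z ^ 2 := mul_nonneg (sub_nonneg.mpr hℓ) (sq_nonneg z)
  rw [gBarrier_eq]
  linarith

theorem gBarrier_gBarrierRoot (hℓ : 0 ≤ ℓ) : gBarrier ℓ γ (gBarrierRoot ℓ γ) = 0 := by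
  have balance : √ℓ * (gBarrierRoot ℓ γ + γ) = 1 - gBarrierRoot ℓ γ := by
    rw [gBarrierRoot]
    field_simp
    ring
  rw [gBarrier, ← balance, mul_pow, Real.sq_sqrt hℓ, sub_self]

theorem neg_lt_gBarrierRoot (hγ : -1 < γ) : -γ < gBarrierRoot ℓ γ := by
  rw [gBarrierRoot, lt_div_iff₀ (by positivity)]
  linarith

theorem gBarrierRoot_neg (h : 1 < √ℓ * γ) : gBarrierRoot ℓ γ < 0 :=
  div_neg_of_neg_of_pos (sub_neg.mpr h) (by positivity)

theorem gBarrierRoot_lt_neg_div {a : ℝ} (hℓ : 1 ≤ ℓ) (hℓγ : 1 < √ℓ * γ)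
    (ha : 2 * ℓ * γ + 2 < a) : gBarrierRoot ℓ γ < -((ℓ * γ ^ 2 - 1) / a) := by
  have γ_pos : 0 < γ := pos_of_mul_pos_right (one_pos.trans hℓγ) (Real.sqrt_nonneg ℓ)
  have a_pos : 0 < a := lt_trans (by positivity) ha
  have line_neg : (ℓ * γ ^ 2 - 1) + a * gBarrierRoot ℓ γ < 0 :=
    (line_lt_gBarrier hℓ ha (gBarrierRoot_neg hℓγ)).trans_eq
      (gBarrier_gBarrierRoot (zero_le_one.trans hℓ))
  rw [← neg_div, lt_div_iff₀' a_pos]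
  linarith

end Barrier

theorem relative_positions_barriers_general {k ℓ γ ε A a₁ zg : ℝ}
    (hk : 0 < k) (hℓ : 1 < ℓ) (hγ : 1 / √ℓ < γ)
    (hε : ε = ℓ * γ ^ 2 - 1) (hA : A = k + 2 - (k - 2 * ℓ) * γ)
    (ha₁ : a₁ = sonicSlope k A ε) (hzg : zg = gBarrierRoot ℓ γ) :
    (∀ z < 0, ε + a₁ * z < gBarrier ℓ γ z) ∧
    (-γ < zg ∧ zg < -(ε / a₁)) ∧
    (∀ b c : ℝ, 0 < c →
      (∀ z ∈ Ioo (-(b / c)) 0, ε + a₁ * z < ε + a₁ * z + b * z ^ 2 + c * z ^ 3) ∧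
      (∀ z ≤ -(b / c), ε + a₁ * z + b * z ^ 2 + c * z ^ 3 ≤ ε + a₁ * z)) := by
  have sqrt_pos : 0 < √ℓ := Real.sqrt_pos.mpr (one_pos.trans hℓ)
  have γ_pos : 0 < γ := (one_div_pos.mpr sqrt_pos).trans hγ
  have one_lt_sqrt_mul : 1 < √ℓ * γ := (div_lt_iff₀' sqrt_pos).mp hγ
  have slope_lt : 2 * ℓ * γ + 2 < a₁ := by
    rw [ha₁, hA, hε]
    exact two_mul_mul_add_two_lt_sonicSlope hk hℓ γ_pos
  rw [hε, hzg]
  refine ⟨fun z hz ↦ line_lt_gBarrier hℓ.le slope_lt hz,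
    ⟨neg_lt_gBarrierRoot (by linarith),
      gBarrierRoot_lt_neg_div hℓ.le one_lt_sqrt_mul slope_lt⟩,
    fun b c hc ↦ ⟨fun z hz ↦ ?_, fun z hz ↦ ?_⟩⟩
  · linarith [(quadratic_add_cubic_pos_iff hc).mpr ⟨hz.2.ne, hz.1⟩]
  · linarith [quadratic_add_cubic_nonpos hc hz]

/-- Relative positions of the barrier functions: `u_g` lies above `u_(1)(z) = ε + a₁z`
for `z < 0`, the location of `z_g`, and comparison of `u_(1)` with `u_(3)`. -/
theorem relative_positions_barriers
    (k : ℕ) (hk : 1 ≤ k) (ℓ γ ε A B a₁ δ R : ℝ)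
    (hℓ : 1 < ℓ) (hγ : 1 / Real.sqrt ℓ < γ)
    (hε : ε = ℓ * γ ^ 2 - 1) (hεpos : 0 < ε)
    (hA : A = (k : ℝ) + 2 - ((k : ℝ) - 2 * ℓ) * γ)
    (hB : B = 2 * (k : ℝ) + 1 - ℓ)
    (hdisc : 0 < (((k : ℝ) - 2) * ε + A) ^ 2 - 8 * ((k : ℝ) - A) * ε)
    (ha₁ : a₁ = ((((k : ℝ) - 2) * ε + A)
        + Real.sqrt ((((k : ℝ) - 2) * ε + A) ^ 2 - 8 * ((k : ℝ) - A) * ε)) / 2)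
    (hδ : δ = A + (k : ℝ) * ε - a₁) (hδpos : 0 < δ)
    (hR : R = (a₁ + 2 * ε) / δ) (hR1 : 1 < R)
    (hRδ : R * δ = a₁ + 2 * ε)
    (hR1δ : (R + 1) * δ = ((k : ℝ) + 2) * ε + A)
    (hRδ2 : R * δ ^ 2 = 2 * (k : ℝ) * ε * (1 + ε))
    (a₂ B₁ a₃ : ℝ)
    (ha₂ : a₂ = (((k : ℝ) - 1) * a₁ ^ 2 - (B - A + 2 * (k : ℝ)) * a₁ + 2 * ((k : ℝ) - B) * ε)
        / ((R - 2) * δ))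
    (hB₁ : B₁ = (3 * (k : ℝ) - 1) * a₁ - 2 * a₂ - 2 * ((k : ℝ) + B))
    (ha₃ : a₃ = (B₁ * a₂ + (ℓ - 1) * a₁) / ((R - 3) * δ))
    (zg : ℝ) (hzg : zg = (1 - Real.sqrt ℓ * γ) / (Real.sqrt ℓ + 1)) :
    (∀ z : ℝ, z < 0 → ε + a₁ * z < ℓ * (z + γ) ^ 2 - (1 - z) ^ 2) ∧
    (-γ < zg ∧ zg < -(ε / a₁)) ∧
    (0 < a₂ → 0 < a₃ →
      (∀ z ∈ Ioo (-(a₂ / a₃)) (0 : ℝ),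
        ε + a₁ * z < ε + a₁ * z + a₂ * z ^ 2 + a₃ * z ^ 3) ∧
      (∀ z : ℝ, z ≤ -(a₂ / a₃) →
        ε + a₁ * z + a₂ * z ^ 2 + a₃ * z ^ 3 ≤ ε + a₁ * z)) := by
  obtain ⟨above_line, root_bounds, cubic⟩ :=
    relative_positions_barriers_general (Nat.cast_pos.mpr hk) hℓ hγ hε hA ha₁ hzg
  exact ⟨above_line, root_bounds, fun _ a₃_pos ↦ cubic a₂ a₃ a₃_pos⟩
end

section
/- Under the standard sonic-point setup with higher Taylor coefficients, assume k = 1 and 3 ≤ R ≤ 4. Then B₂ > 0. -/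
open Set

/-! For `k = 1`, eliminating `A`, `B`, `a₁` and `a₂` makes `(R - 2) B₂` a polynomial in
`(R, δ, ε, ℓ)` which is affine and decreasing in `ℓ`. The relation
`(R + 1) δ - 3 (1 + ε) = (2ℓ - 1) γ` bounds `ℓ` from above, so that with `E = 1 + ε = ℓ γ²` the
product `E (R - 2) B₂` dominates a binary quadratic form in `(E, δ)`, decreasing in `δ ≥ 0`. The
relation `R δ² = 2ε(1 + ε)` gives `√(2R) |δ| < 2E`, and on the line `√(2R) δ = 2E` the form factors
as a square times a quartic in `√(2R)` whose sign is constant on the relevant range of `R`. -/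

/-- The numerator of `B₂` when `k = 1`: the polynomial `(R - 2) B₂` in the coordinates
`(R, δ, ε, ℓ)`. -/
def B2Numerator (R δ ε ℓ : ℝ) : ℝ :=
  14 * R + 22 + 20 * (R + 1) * ε - (2 * R ^ 2 + 27 * R - 2) * δ - (2 * R + 6) * ℓ

/-- The quadratic form in `(E, δ)` that bounds `E * B2Numerator R δ (E - 1) ℓ` from below,
obtained by inserting the upper bound `4 (ℓ - 1) E ≤ ((R + 1) δ - 3 E)²` for `ℓ` and homogenizing
with `R δ² = 2 E (E - 1)`. -/
noncomputable def B2Form (R E δ : ℝ) : ℝ :=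
  (15 / 2 * R + 5 / 2) * E ^ 2 - (15 * R - 11 - R ^ 2) * E * δ
    - (R ^ 3 - 3 * R ^ 2 + 3 * R + 3) / 2 * δ ^ 2

theorem sub_two_mul_B2_eq_B2Numerator {R δ ε ℓ A B a₁ a₂ B₂ : ℝ} (hδ : δ ≠ 0) (hR : R ≠ 2)
    (hB : B = 3 - ℓ) (hRδ : R * δ = a₁ + 2 * ε) (hR1δ : (R + 1) * δ = 3 * ε + A)
    (hRδ2 : R * δ ^ 2 = 2 * ε * (1 + ε))
    (ha₂ : a₂ = (-(B - A + 2) * a₁ + 2 * (1 - B) * ε) / ((R - 2) * δ))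
    (hB₂ : B₂ = -5 * a₂ + 4 * a₁ - (2 + A + 3 * B)) :
    (R - 2) * B₂ = B2Numerator R δ ε ℓ := by
  have ha₂_mul : a₂ * ((R - 2) * δ) = -(B - A + 2) * a₁ + 2 * (1 - B) * ε := by
    rw [ha₂, div_mul_cancel₀ _ (mul_ne_zero (sub_ne_zero.2 hR) hδ)]
  obtain rfl : a₁ = R * δ - 2 * ε := by linarith
  obtain rfl : A = (R + 1) * δ - 3 * ε := by linarith
  subst hB hB₂
  refine mul_left_cancel₀ hδ ?_
  rw [B2Numerator]
  linear_combination -5 * ha₂_mul + 15 * hRδ2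

theorem four_mul_sub_one_mul_le_sq (ℓ γ : ℝ) :
    4 * (ℓ - 1) * (ℓ * γ ^ 2) ≤ ((2 * ℓ - 1) * γ) ^ 2 := by
  linarith [sq_nonneg γ]

theorem B2Form_le_mul_B2Numerator {R δ ε ℓ : ℝ} (hR : -3 ≤ R)
    (hRδ2 : R * δ ^ 2 = 2 * ε * (1 + ε))
    (hℓ : 4 * (ℓ - 1) * (1 + ε) ≤ ((R + 1) * δ - 3 * (1 + ε)) ^ 2) :
    B2Form R (1 + ε) δ ≤ (1 + ε) * B2Numerator R δ ε ℓ := by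
  have hℓ_weighted := mul_le_mul_of_nonneg_left hℓ (by linarith : 0 ≤ (R + 3) / 2)
  rw [B2Form, B2Numerator]
  linear_combination hℓ_weighted + (4 * R + 2) * hRδ2

theorem B2Form_lt_of_abs_lt {R E δ τ : ℝ} (hR : 1 ≤ R) (hR' : R ≤ 14) (hE : 0 ≤ E)
    (hδτ : |δ| < τ) : B2Form R E τ < B2Form R E δ := by
  have hlin : 0 ≤ 15 * R - 11 - R ^ 2 := by
    linarith [mul_nonneg (sub_nonneg.2 hR) (sub_nonneg.2 hR')]
  have hquad : 0 < R ^ 3 - 3 * R ^ 2 + 3 * R + 3 := by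
    linarith [pow_nonneg (sub_nonneg.2 hR) 3]
  have hlt : δ < τ := (le_abs_self δ).trans_lt hδτ
  have hsq : δ ^ 2 < τ ^ 2 := sq_lt_sq.2 (hδτ.trans_le (le_abs_self τ))
  have hmixed := mul_le_mul_of_nonneg_left hlt.le (mul_nonneg hlin hE)
  have hsquare := mul_lt_mul_of_pos_left hsq hquad
  rw [B2Form, B2Form]
  linarith

theorem B2Form_half_sq_eq (s τ : ℝ) :
    B2Form (s ^ 2 / 2) (s * τ / 2) τ
      = (τ / 4 * (s - 2)) ^ 2 * -(s ^ 4 + 2 * s ^ 3 - 17 * s ^ 2 - 16 * s + 6) := by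
  rw [B2Form]
  ring

/-- The upper bound is close to optimal: the largest root of the quartic is `s ≈ 3.680`, where
`s ^ 2 ≈ 13.54`. -/
theorem B2_quartic_nonpos {s : ℝ} (hs : 0 ≤ s) (hs2 : 2 ≤ s ^ 2) (hs2' : s ^ 2 ≤ 27 / 2) :
    s ^ 4 + 2 * s ^ 3 - 17 * s ^ 2 - 16 * s + 6 ≤ 0 := by
  have hquartic : s ^ 4 ≤ 31 / 2 * s ^ 2 - 27 := by
    linarith [mul_nonneg (sub_nonneg.2 hs2) (sub_nonneg.2 hs2')]
  have hcubic : s ^ 3 ≤ 27 / 2 * s := by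
    linarith [mul_nonneg hs (sub_nonneg.2 hs2')]
  linarith [sq_nonneg (s - 11 / 3)]

theorem B2Form_pos {R E δ : ℝ} (hR : 1 ≤ R) (hR' : R ≤ 27 / 4) (hE : 0 < E)
    (hδ : R * δ ^ 2 < 2 * E ^ 2) : 0 < B2Form R E δ := by
  obtain ⟨s, hs, rfl⟩ : ∃ s, 0 < s ∧ R = s ^ 2 / 2 :=
    ⟨√(2 * R), by positivity, by rw [Real.sq_sqrt (by positivity)]; ring⟩
  obtain ⟨τ, rfl⟩ : ∃ τ, E = s * τ / 2 := ⟨2 * E / s, by field_simp⟩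
  have hτ : 0 < τ := pos_of_mul_pos_right (by linarith : 0 < s * τ) hs.le
  have hδτ : |δ| < τ := by
    refine abs_lt_of_sq_lt_sq (lt_of_mul_lt_mul_left ?_ (by positivity : 0 ≤ s ^ 2 / 2)) hτ.le
    linarith
  have hboundary : 0 ≤ B2Form (s ^ 2 / 2) (s * τ / 2) τ := by
    rw [B2Form_half_sq_eq]
    exact mul_nonneg (sq_nonneg _)
      (neg_nonneg.2 (B2_quartic_nonpos hs.le (by linarith) (by linarith)))
  exact hboundary.trans_lt (B2Form_lt_of_abs_lt hR (by linarith) hE.le hδτ)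

theorem B2Numerator_pos {R δ ε ℓ : ℝ} (hε : 0 < ε) (hR : 1 ≤ R) (hR' : R ≤ 27 / 4)
    (hRδ2 : R * δ ^ 2 = 2 * ε * (1 + ε))
    (hℓ : 4 * (ℓ - 1) * (1 + ε) ≤ ((R + 1) * δ - 3 * (1 + ε)) ^ 2) :
    0 < B2Numerator R δ ε ℓ := by
  have hform : 0 < B2Form R (1 + ε) δ := B2Form_pos hR hR' (by linarith) (by linarith)
  exact pos_of_mul_pos_right
    (hform.trans_le (B2Form_le_mul_B2Numerator (by linarith) hRδ2 hℓ)) (by linarith)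

theorem B2_pos_k_eq_one_general {ℓ γ ε A B a₁ δ R a₂ B₂ : ℝ}
    (hε : ε = ℓ * γ ^ 2 - 1) (hεpos : 0 < ε) (hA : A = 3 - (1 - 2 * ℓ) * γ) (hB : B = 3 - ℓ)
    (hRδ : R * δ = a₁ + 2 * ε) (hR1δ : (R + 1) * δ = 3 * ε + A)
    (hRδ2 : R * δ ^ 2 = 2 * ε * (1 + ε))
    (ha₂ : a₂ = (-(B - A + 2) * a₁ + 2 * (1 - B) * ε) / ((R - 2) * δ))
    (hB₂ : B₂ = -5 * a₂ + 4 * a₁ - (2 + A + 3 * B))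
    (hR : 1 ≤ R) (hR2 : R ≠ 2) (hR' : R ≤ 27 / 4) :
    0 < (R - 2) * B₂ := by
  have hδ : δ ≠ 0 := by
    rintro rfl
    linarith [mul_pos hεpos hεpos]
  have hE : 1 + ε = ℓ * γ ^ 2 := by linarith
  have hℓγ : (R + 1) * δ - 3 * (1 + ε) = (2 * ℓ - 1) * γ := by linarith
  rw [sub_two_mul_B2_eq_B2Numerator hδ hR2 hB hRδ hR1δ hRδ2 ha₂ hB₂]
  refine B2Numerator_pos hεpos hR hR' hRδ2 ?_
  rw [hℓγ, hE]
  exact four_mul_sub_one_mul_le_sq ℓ γ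

/-- For `k = 1` and `R ∈ [3, 4]`, the coefficient `B₂` is positive. -/
theorem B2_pos_k_eq_one
    (k : ℕ) (hk : 1 ≤ k) (ℓ γ ε A B a₁ δ R : ℝ)
    (hℓ : 1 < ℓ) (hγ : 1 / Real.sqrt ℓ < γ)
    (hε : ε = ℓ * γ ^ 2 - 1) (hεpos : 0 < ε)
    (hA : A = (k : ℝ) + 2 - ((k : ℝ) - 2 * ℓ) * γ)
    (hB : B = 2 * (k : ℝ) + 1 - ℓ)
    (hdisc : 0 < (((k : ℝ) - 2) * ε + A) ^ 2 - 8 * ((k : ℝ) - A) * ε)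
    (ha₁ : a₁ = ((((k : ℝ) - 2) * ε + A)
        + Real.sqrt ((((k : ℝ) - 2) * ε + A) ^ 2 - 8 * ((k : ℝ) - A) * ε)) / 2)
    (hδ : δ = A + (k : ℝ) * ε - a₁) (hδpos : 0 < δ)
    (hR : R = (a₁ + 2 * ε) / δ) (hR1 : 1 < R)
    (hRδ : R * δ = a₁ + 2 * ε)
    (hR1δ : (R + 1) * δ = ((k : ℝ) + 2) * ε + A)
    (hRδ2 : R * δ ^ 2 = 2 * (k : ℝ) * ε * (1 + ε))
    (a₂ B₂ : ℝ)
    (ha₂ : a₂ = (((k : ℝ) - 1) * a₁ ^ 2 - (B - A + 2 * (k : ℝ)) * a₁ + 2 * ((k : ℝ) - B) * ε)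
        / ((R - 2) * δ))
    (hB₂ : B₂ = -5 * a₂ + 4 * (k : ℝ) * a₁ - (2 * (k : ℝ) + A + 3 * B))
    (hk1 : k = 1) (hR3 : 3 ≤ R) (hR4 : R ≤ 4) :
    0 < B₂ := by
  subst hk1
  simp only [Nat.cast_one] at hA hB hR1δ hRδ2 ha₂ hB₂
  have hpos : 0 < (R - 2) * B₂ :=
    B2_pos_k_eq_one_general (A := A) (B := B) (a₂ := a₂) hε hεpos (by linarith) (by linarith)
      hRδ (by linarith) (by linarith) (by rw [ha₂]; ring) (by linarith) hR1.le (by linarith)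
      (by linarith)
  exact pos_of_mul_pos_right hpos (by linarith)
end

section
/- Let k ≥ 2 be an integer and let ℓ be a real number with 1 < ℓ < k; set B := 2k + 1 − ℓ and μ := (k+2)² − (k−2ℓ)²/ℓ. Define, for R > 0, g_k(R) := 2(k+1)R + k² − 11k − 22 + (8k² + 23k + 16)/R + 2k/R², h_{k,ℓ}(R) := 2(4k + B)R + 4k(k+5) + (k+10)B − 8μ + ((k+4)(2k+3B) + μ)/R, and h*_{k,ℓ}(R) := h_{k,ℓ}(R) − 2g_k(R). Then for every R ∈ [3, 4]: the derivative g_k′(R) ≤ 0, g_k(R) > 0, and the derivative (h*_{k,ℓ})′(R) > 0. -/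
open Set

/-!
Both `g` and `h*` have the form `a R + b + c / R + d / R²`. After clearing denominators, `g` and
`-g'` regroup into sums of terms, some with a factor `k - 2`, that are visibly nonnegative for
`k ≥ 2`. In the derivative of `h*` every coefficient is nonnegative, because `μ ≤ (k + 2)²`.
-/

/-- The parameter `B = 2k + 1 - ℓ`. -/
def sonicB (k ℓ : ℝ) : ℝ := 2 * k + 1 - ℓ

/-- The parameter `μ = (k + 2)² - (k - 2ℓ)² / ℓ`, meaningful for `ℓ ≠ 0`. -/
noncomputable def sonicMu (k ℓ : ℝ) : ℝ := (k + 2) ^ 2 - (k - 2 * ℓ) ^ 2 / ℓ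

/-- The function `g_k` that multiplies `-R a₁` in the expansion of `B₂`, with `k` allowed to be
real. -/
noncomputable def sonicG (k R : ℝ) : ℝ :=
  2 * (k + 1) * R + k ^ 2 - 11 * k - 22 + (8 * k ^ 2 + 23 * k + 16) / R + 2 * k / R ^ 2

/-- The function `h_{k,ℓ}` that multiplies `2R` in the expansion of `B₂`, with `k` allowed to be
real. -/
noncomputable def sonicH (k ℓ R : ℝ) : ℝ :=
  2 * (4 * k + sonicB k ℓ) * R + 4 * k * (k + 5) + (k + 10) * sonicB k ℓ - 8 * sonicMu k ℓ
    + ((k + 4) * (2 * k + 3 * sonicB k ℓ) + sonicMu k ℓ) / R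

/-- The combination `h*_{k,ℓ} = h_{k,ℓ} - 2 g_k`. -/
noncomputable def sonicHStar (k ℓ R : ℝ) : ℝ := sonicH k ℓ R - 2 * sonicG k R

theorem hasDerivAt_mul_add_add_div_add_div_sq {𝕜 : Type*} [NontriviallyNormedField 𝕜]
    (a b c d : 𝕜) {x : 𝕜} (hx : x ≠ 0) :
    HasDerivAt (fun y ↦ a * y + b + c / y + d / y ^ 2) (a - c / x ^ 2 - 2 * d / x ^ 3) x := by
  have h_linear : HasDerivAt (fun y ↦ a * y + b) a x := by
    simpa using ((hasDerivAt_id' x).const_mul a).add_const b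
  have h_inv := (hasDerivAt_const x c).fun_div (hasDerivAt_id' x) hx
  have h_inv_sq := (hasDerivAt_const x d).fun_div (hasDerivAt_pow 2 x) (pow_ne_zero 2 hx)
  refine ((h_linear.fun_add h_inv).fun_add h_inv_sq).congr_deriv ?_
  field_simp
  push_cast
  ring

section

variable {k ℓ R : ℝ}

theorem hasDerivAt_sonicG (k : ℝ) (hR : R ≠ 0) :
    HasDerivAt (sonicG k)
      (2 * (k + 1) - (8 * k ^ 2 + 23 * k + 16) / R ^ 2 - 4 * k / R ^ 3) R := by
  have h_laurent := hasDerivAt_mul_add_add_div_add_div_sq (2 * (k + 1)) (k ^ 2 - 11 * k - 22)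
    (8 * k ^ 2 + 23 * k + 16) (2 * k) hR
  refine (h_laurent.congr_deriv (by ring)).congr_of_eventuallyEq (.of_forall fun y ↦ ?_)
  unfold sonicG
  ring

-- Equality holds at `k = 2`, `R = 4`, so each summand in the numerator must vanish there.
theorem deriv_sonicG_nonpos (hk : 2 ≤ k) (hR : R ∈ Ioc 0 4) : deriv (sonicG k) R ≤ 0 := by
  obtain ⟨hR₀, hR₄⟩ := hR
  have h_deriv : deriv (sonicG k) R =
      -((2 * (k + 1) * R * (16 - R ^ 2) + 8 * (k - 2) * (k + 1) * R + k * (4 - R)) / R ^ 3) := by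
    rw [(hasDerivAt_sonicG k hR₀.ne').deriv]
    field_simp
    ring
  have h_cubic : 0 ≤ 2 * (k + 1) * R * (16 - R ^ 2) :=
    mul_nonneg (by positivity) (by nlinarith)
  have h_linear : 0 ≤ 8 * (k - 2) * (k + 1) * R :=
    mul_nonneg (mul_nonneg (by linarith) (by linarith)) hR₀.le
  have h_const : 0 ≤ k * (4 - R) := mul_nonneg (by linarith) (by linarith)
  rw [h_deriv, neg_nonpos]
  exact div_nonneg (add_nonneg (add_nonneg h_cubic h_linear) h_const) (by positivity)

theorem sonicG_pos (hk : 2 ≤ k) (hR : 0 < R) : 0 < sonicG k R := by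
  have h_expand : sonicG k R =
      ((k - 2) ^ 2 * (R + 8) + (k - 2) * (2 * R ^ 2 - 7 * R + 55) + (6 * R ^ 2 - 40 * R + 94)) / R
        + 2 * k / R ^ 2 := by
    unfold sonicG
    field_simp
    ring
  have h_linear : 0 ≤ (k - 2) * (2 * R ^ 2 - 7 * R + 55) :=
    mul_nonneg (by linarith) (by nlinarith [sq_nonneg (4 * R - 7)])
  have h_const : 0 < 6 * R ^ 2 - 40 * R + 94 := by nlinarith [sq_nonneg (3 * R - 10)]
  rw [h_expand]
  positivity

theorem hasDerivAt_sonicHStar (k ℓ : ℝ) (hR : R ≠ 0) :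
    HasDerivAt (sonicHStar k ℓ)
      (2 * (4 * k - 1 - ℓ) + (8 * k ^ 2 + 11 * k + 20 + 3 * (k + 4) * ℓ - sonicMu k ℓ) / R ^ 2
        + 8 * k / R ^ 3) R := by
  have h_laurent := hasDerivAt_mul_add_add_div_add_div_sq (2 * (4 * k - 1 - ℓ))
    (4 * k * (k + 5) + (k + 10) * sonicB k ℓ - 8 * sonicMu k ℓ - 2 * (k ^ 2 - 11 * k - 22))
    (-(8 * k ^ 2 + 11 * k + 20 + 3 * (k + 4) * ℓ - sonicMu k ℓ)) (-(4 * k)) hR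
  refine (h_laurent.congr_deriv (by ring)).congr_of_eventuallyEq (.of_forall fun y ↦ ?_)
  unfold sonicHStar sonicH sonicG sonicB
  ring

theorem sonicMu_le (k : ℝ) (hℓ : 0 < ℓ) : sonicMu k ℓ ≤ (k + 2) ^ 2 :=
  sub_le_self _ (by positivity)

theorem deriv_sonicHStar_pos (hℓ : 0 < ℓ) (hℓk : ℓ ≤ 4 * k - 1) (hR : 0 < R) :
    0 < deriv (sonicHStar k ℓ) R := by
  have hk : 0 < k := by linarith
  have h_coeff : 0 < 8 * k ^ 2 + 11 * k + 20 + 3 * (k + 4) * ℓ - sonicMu k ℓ :=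
    calc
      0 < 7 * k ^ 2 + 7 * k + 16 + 3 * (k + 4) * ℓ := by positivity
      _ = 8 * k ^ 2 + 11 * k + 20 + 3 * (k + 4) * ℓ - (k + 2) ^ 2 := by ring
      _ ≤ 8 * k ^ 2 + 11 * k + 20 + 3 * (k + 4) * ℓ - sonicMu k ℓ := by
        gcongr
        exact sonicMu_le k hℓ
  rw [(hasDerivAt_sonicHStar k ℓ hR.ne').deriv]
  exact add_pos (add_pos_of_nonneg_of_pos (by linarith only [hℓk]) (by positivity)) (by positivity)

theorem g_h_monotonicity_general (hk : 2 ≤ k) (hℓ : 0 < ℓ) (hℓk : ℓ ≤ 4 * k - 1) :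
    (∀ R ∈ Ioc 0 4, deriv (sonicG k) R ≤ 0) ∧ (∀ R > 0, 0 < sonicG k R) ∧
      ∀ R > 0, 0 < deriv (sonicHStar k ℓ) R :=
  ⟨fun _ ↦ deriv_sonicG_nonpos hk, fun _ ↦ sonicG_pos hk, fun _ ↦ deriv_sonicHStar_pos hℓ hℓk⟩

end

/-- Monotonicity properties on `[3, 4]` of the rational functions `g_k`, `h_{k,ℓ}` and
`h*_{k,ℓ} = h_{k,ℓ} − 2 g_k` arising in the expansion of `B₂`. -/
theorem g_h_monotonicity (k : ℕ) (hk : 2 ≤ k) (ℓ : ℝ) (hℓ : 1 < ℓ) (hℓk : ℓ < (k : ℝ))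
    (B μ : ℝ)
    (hB : B = 2 * (k : ℝ) + 1 - ℓ)
    (hμ : μ = ((k : ℝ) + 2) ^ 2 - ((k : ℝ) - 2 * ℓ) ^ 2 / ℓ)
    (g h hstar : ℝ → ℝ)
    (hg : ∀ R : ℝ, g R = 2 * ((k : ℝ) + 1) * R + (k : ℝ) ^ 2 - 11 * (k : ℝ) - 22
        + (8 * (k : ℝ) ^ 2 + 23 * (k : ℝ) + 16) / R + 2 * (k : ℝ) / R ^ 2)
    (hh : ∀ R : ℝ, h R = 2 * (4 * (k : ℝ) + B) * R + 4 * (k : ℝ) * ((k : ℝ) + 5)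
        + ((k : ℝ) + 10) * B - 8 * μ + (((k : ℝ) + 4) * (2 * (k : ℝ) + 3 * B) + μ) / R)
    (hhstar : ∀ R : ℝ, hstar R = h R - 2 * g R) :
    ∀ R ∈ Icc (3 : ℝ) 4, deriv g R ≤ 0 ∧ 0 < g R ∧ 0 < deriv hstar R := by
  have hk' : (2 : ℝ) ≤ k := mod_cast hk
  obtain rfl : g = sonicG k := funext hg
  obtain rfl : hstar = sonicHStar k ℓ := by
    funext R
    rw [hhstar, hh, hB, hμ, sonicHStar, sonicH, sonicB, sonicMu]
  obtain ⟨hg_deriv, hg_pos, hstar_deriv⟩ :=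
    g_h_monotonicity_general (ℓ := ℓ) hk' (by linarith) (by linarith)
  intro R ⟨hR₃, hR₄⟩
  have hR₀ : 0 < R := by linarith
  exact ⟨hg_deriv R ⟨hR₀, hR₄⟩, hg_pos R hR₀, hstar_deriv R hR₀⟩
end

section
/- For every integer k ≥ 2, the function ε ↦ (68k + 12)·ε − (33k + 64)·√(2k/3)·√(ε(1 + ε)) is strictly decreasing on (0, ∞). -/
open Set

/-!
The function `ε ↦ √(ε(1 + ε)) - ε` is strictly increasing on `[0, ∞)`. Hence
`A ε - C √(ε(1 + ε)) = (A - C) ε - C (√(ε(1 + ε)) - ε)` is strictly decreasing as soon as `0 < C`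
and `A ≤ C`. For `A = 68κ + 12` and `C = (33κ + 64) √(2κ/3)`, squaring reduces `A ≤ C` to a cubic
inequality in `κ`.
-/

theorem strictAntiOn_mul_sub_mul {R : Type*} [CommRing R] [LinearOrder R] [IsStrictOrderedRing R]
    {s : Set R} {f : R → R} {A C : R} (hf : StrictMonoOn (fun x => f x - x) s) (hC : 0 < C)
    (hAC : A ≤ C) : StrictAntiOn (fun x => A * x - C * f x) s := by
  intro a ha b hb hab
  have slope : (A - C) * b ≤ (A - C) * a :=
    mul_le_mul_of_nonpos_left hab.le (sub_nonpos.2 hAC)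
  have excess : C * (f a - a) < C * (f b - b) := mul_lt_mul_of_pos_left (hf ha hb hab) hC
  calc A * b - C * f b = (A - C) * b - C * (f b - b) := by ring
    _ < (A - C) * a - C * (f a - a) := by linarith only [slope, excess]
    _ = A * a - C * f a := by ring

theorem sqrt_mul_add_self_lt {c x : ℝ} (hc : c ≠ 0) (hx : 0 < x + c / 2) :
    √(x * (c + x)) < x + c / 2 := by
  rw [Real.sqrt_lt' hx]
  calc x * (c + x) < x * (c + x) + (c / 2) ^ 2 := lt_add_of_pos_right _ (by positivity)
    _ = (x + c / 2) ^ 2 := by ring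

theorem strictMonoOn_sqrt_mul_add_self_sub {c : ℝ} (hc : 0 < c) :
    StrictMonoOn (fun x => √(x * (c + x)) - x) (Ici 0) := by
  intro a (ha : 0 ≤ a) b _ hab
  have sq_sqrt : √(a * (c + a)) ^ 2 = a * (c + a) := Real.sq_sqrt (by positivity)
  have gap : (b - a) * √(a * (c + a)) < (b - a) * (a + c / 2) :=
    mul_lt_mul_of_pos_left (sqrt_mul_add_self_lt hc.ne' (by positivity)) (sub_pos.2 hab)
  have shift : √(a * (c + a)) + (b - a) < √(b * (c + b)) := by
    apply Real.lt_sqrt_of_sq_lt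
    calc (√(a * (c + a)) + (b - a)) ^ 2
        = a * (c + a) + 2 * ((b - a) * √(a * (c + a))) + (b - a) ^ 2 := by
          rw [add_sq, sq_sqrt]; ring
      _ < a * (c + a) + 2 * ((b - a) * (a + c / 2)) + (b - a) ^ 2 := by gcongr
      _ = b * (c + b) := by ring
  change √(a * (c + a)) - a < √(b * (c + b)) - b
  linarith only [shift]

-- The sides agree at `κ ≈ 1.643`, and the inequality fails just to the left of that point.
theorem linear_coeff_le_sqrt_coeff {κ : ℝ} (hκ : 5 / 3 ≤ κ) :
    68 * κ + 12 ≤ (33 * κ + 64) * √(2 * κ / 3) := by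
  have : 0 ≤ κ := by linarith only [hκ]
  have : 0 ≤ κ - 5 / 3 := sub_nonneg.2 hκ
  -- three times the difference of the squares of the two sides, expanded at `κ = 5 / 3`
  have cubic_nonneg : 0 ≤ 2178 * (κ - 5 / 3) ^ 3 + 5466 * (κ - 5 / 3) ^ 2
      + 3366 * (κ - 5 / 3) + 78 := by positivity
  refine le_of_sq_le_sq ?_ (by positivity)
  rw [mul_pow, Real.sq_sqrt (by positivity)]
  linarith only [cubic_nonneg]

theorem f3_strictAntiOn_general {κ : ℝ} (hκ : 5 / 3 ≤ κ) :
    StrictAntiOn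
      (fun ε : ℝ => (68 * κ + 12) * ε - (33 * κ + 64) * √(2 * κ / 3) * √(ε * (1 + ε)))
      (Ici 0) := by
  have : 0 < κ := by linarith only [hκ]
  exact strictAntiOn_mul_sub_mul (strictMonoOn_sqrt_mul_add_self_sub one_pos) (by positivity)
    (linear_coeff_le_sqrt_coeff hκ)

/-- For every integer `k ≥ 2`, the function
`ε ↦ (68k + 12) ε − (33k + 64) √(2k/3) √(ε(1 + ε))` is strictly decreasing on `(0, ∞)`. -/
theorem f3_strictAntiOn (k : ℕ) (hk : 2 ≤ k) :
    StrictAntiOn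
      (fun ε : ℝ =>
        (68 * (k : ℝ) + 12) * ε
          - (33 * (k : ℝ) + 64) * Real.sqrt (2 * (k : ℝ) / 3) * Real.sqrt (ε * (1 + ε)))
      (Ioi (0 : ℝ)) := by
  have hκ : (5 / 3 : ℝ) ≤ k := le_trans (by norm_num) (Nat.ofNat_le_cast.2 hk)
  exact (f3_strictAntiOn_general hκ).mono Ioi_subset_Ici_self
end

section
/- Let k > 0, m > 0 and ℓ > 1 be reals, and let v : [0,∞) → ℝ be infinitely differentiable with |v(Z)| < 1 for all Z ≥ 0 and Δ_Z(Z, v(Z))·v′(Z) = Δ_v(Z, v(Z)) for all Z ≥ 0. Then v(Z) converges as Z → +∞ to a limit v_∞ with −1 < v_∞ < 1, and the function ṽ : [0,∞) → ℝ defined by ṽ(W) := v(1/W) for W > 0 and ṽ(0) := v_∞ is infinitely differentiable on [0,∞). -/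
open Real Set Filter Topology

/-- Numerator of the self-similar relativistic Euler ODE `dv/dZ = Δ_v / Δ_Z`. -/
noncomputable def Deltav (m k Z v : ℝ) : ℝ :=
  (1 - v ^ 2) * (m * (1 - v ^ 2) * Z - k * v * (1 - v * Z))

/-- Denominator of the self-similar relativistic Euler ODE `dv/dZ = Δ_v / Δ_Z`. -/
noncomputable def DeltaZ (ℓ Z v : ℝ) : ℝ :=
  Z * ((1 - Z * v) ^ 2 - ℓ * (v - Z) ^ 2)

/-!
In the variable `W = 1 / Z` the solution `w W = v (1 / W)` satisfies `w' = (1 - w²) R(W, w)`, whose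
coefficient `R` is smooth and bounded on `[0, b] × [-1, 1]` for `b < 1`: its denominator is
`(ℓ - 1) (1 - w W)² + (1 - w²) (1 - W²) > 0`. The rapidity `artanh w` has derivative `R(W, w)`, so
it is Lipschitz and converges to a finite limit as `W → 0⁺`, which keeps the limit of `w` strictly
inside `(-1, 1)`. The extended `w` still solves the equation at `W = 0`, and a solution of a smooth
ODE is smooth.
-/

section OneSidedLimits

variable {E : Type*} [NormedAddCommGroup E] [NormedSpace ℝ E]

theorem exists_tendsto_nhdsGT_of_norm_hasDerivAt_le [CompleteSpace E] {f f' : ℝ → E} {a b C : ℝ}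
    (hab : a < b) (hf : ∀ x ∈ Ioo a b, HasDerivAt f (f' x) x)
    (hC : ∀ x ∈ Ioo a b, ‖f' x‖ ≤ C) :
    ∃ L, Tendsto f (𝓝[>] a) (𝓝 L) := by
  have hLipschitz : LipschitzOnWith C.toNNReal f (Ioo a b) :=
    (convex_Ioo a b).lipschitzOnWith_of_nnnorm_hasDerivWithin_le
      (fun x hx ↦ (hf x hx).hasDerivWithinAt)
      fun x hx ↦ NNReal.coe_le_coe.mp ((hC x hx).trans (le_coe_toNNReal C))
  have hCauchy : Cauchy (𝓝[>] a) := cauchy_nhds.mono nhdsWithin_le_nhds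
  exact cauchy_map_iff_exists_tendsto.mp
    (hCauchy.map_of_le hLipschitz.uniformContinuousOn (le_principal_iff.mpr (Ioo_mem_nhdsGT hab)))

theorem hasDerivWithinAt_Ici_update_of_tendsto {f f' : ℝ → E} {a : ℝ} {L L' : E}
    (hf : ∀ᶠ x in 𝓝[>] a, HasDerivAt f (f' x) x) (hL : Tendsto f (𝓝[>] a) (𝓝 L))
    (hL' : Tendsto f' (𝓝[>] a) (𝓝 L')) :
    HasDerivWithinAt (Function.update f a L) L' (Ici a) a := by
  have hupdate : ∀ᶠ x in 𝓝[>] a, HasDerivAt (Function.update f a L) (f' x) x := by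
    filter_upwards [hf, self_mem_nhdsWithin] with x hx hax
    exact hx.congr_of_eventuallyEq
      ((eventually_ne_nhds (ne_of_gt hax)).mono fun y hy ↦ Function.update_of_ne hy L f)
  refine hasDerivWithinAt_Ici_of_tendsto_deriv
    (s := {x | HasDerivAt (Function.update f a L) (f' x) x} ∩ Ioi a)
    (fun x hx ↦ hx.1.differentiableAt.differentiableWithinAt) ?_
    (inter_mem hupdate self_mem_nhdsWithin)
    (hL'.congr' (hupdate.mono fun x hx ↦ hx.deriv.symm))
  refine ContinuousWithinAt.mono ?_ inter_subset_right
  rw [continuousWithinAt_update_same]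
  exact hL.mono_left (nhdsWithin_mono a sdiff_subset)

theorem contDiffOn_Icc_update_of_hasDerivAt [CompleteSpace E] {n : ℕ∞} {f : ℝ → E → E} {u : Set E}
    {α : ℝ → E} {a b : ℝ} {L : E} (hab : a < b)
    (hf : ContDiffOn ℝ n (Function.uncurry f) (Icc a b ×ˢ u))
    (hα : ∀ t ∈ Ioc a b, HasDerivAt α (f t (α t)) t) (hmem : MapsTo α (Ioc a b) u)
    (hLu : L ∈ u) (hL : Tendsto α (𝓝[>] a) (𝓝 L)) :
    ContDiffOn ℝ n (Function.update α a L) (Icc a b) := by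
  have hcurve : Tendsto (fun t ↦ (t, α t)) (𝓝[>] a) (𝓝[Icc a b ×ˢ u] (a, L)) := by
    refine tendsto_nhdsWithin_iff.mpr
      ⟨(tendsto_id.mono_left nhdsWithin_le_nhds).prodMk_nhds hL, ?_⟩
    filter_upwards [Ioc_mem_nhdsGT hab] with t ht
    exact ⟨Ioc_subset_Icc_self ht, hmem ht⟩
  have hendpoint : HasDerivWithinAt (Function.update α a L) (f a L) (Ici a) a :=
    hasDerivWithinAt_Ici_update_of_tendsto (eventually_of_mem (Ioc_mem_nhdsGT hab) hα) hL
      ((hf.continuousOn (a, L) ⟨left_mem_Icc.mpr hab.le, hLu⟩).tendsto.comp hcurve)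
  refine ODE.contDiffOn_enat_Icc_of_hasDerivWithinAt hf (fun t ht ↦ ?_) fun t ht ↦ ?_ <;>
    rcases eq_or_lt_of_le ht.1 with rfl | hat
  · rw [Function.update_self]
    exact hendpoint.mono Icc_subset_Ici_self
  · rw [Function.update_of_ne hat.ne']
    exact ((hα t ⟨hat, ht.2⟩).congr_of_eventuallyEq ((eventually_ne_nhds hat.ne').mono
      fun s hs ↦ Function.update_of_ne hs L α)).hasDerivWithinAt
  · rwa [Function.update_self]
  · rw [Function.update_of_ne hat.ne']
    exact hmem ⟨hat, ht.2⟩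

theorem contDiffOn_Ici_of_Icc_of_Ioi {n : WithTop ℕ∞} {f : ℝ → E} {a b : ℝ} (hab : a < b)
    (hIcc : ContDiffOn ℝ n f (Icc a b)) (hIoi : ContDiffOn ℝ n f (Ioi a)) :
    ContDiffOn ℝ n f (Ici a) := by
  intro x hx
  rcases eq_or_lt_of_le (mem_Ici.mp hx) with rfl | hax
  · exact (hIcc a (left_mem_Icc.mpr hab.le)).mono_of_mem_nhdsWithin (Icc_mem_nhdsGE hab)
  · exact (hIoi.contDiffAt (Ioi_mem_nhds hax)).contDiffWithinAt

end OneSidedLimits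

section Inversion

theorem exists_forall_Ioc_one_div_of_eventually_atTop {p : ℝ → Prop} (hp : ∀ᶠ Z in atTop, p Z) :
    ∃ b ∈ Ioo (0 : ℝ) 1, ∀ W ∈ Ioc 0 b, p (1 / W) := by
  have hnear : ∀ᶠ W in 𝓝[>] (0 : ℝ), p (1 / W) := by
    simpa only [one_div] using tendsto_inv_nhdsGT_zero.eventually hp
  obtain ⟨c, hc, hcp⟩ := mem_nhdsGT_iff_exists_Ioc_subset.mp hnear
  refine ⟨min c (1 / 2), ⟨lt_min hc (by norm_num), min_lt_of_right_lt (by norm_num)⟩, ?_⟩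
  exact fun W hW ↦ hcp ⟨hW.1, hW.2.trans (min_le_left c (1 / 2))⟩

theorem tendsto_atTop_of_tendsto_comp_one_div {β : Type*} {f : ℝ → β} {l : Filter β}
    (hf : Tendsto (fun W ↦ f (1 / W)) (𝓝[>] 0) l) : Tendsto f atTop l := by
  refine (hf.comp tendsto_inv_atTop_nhdsGT_zero).congr fun Z ↦ ?_
  simp only [Function.comp_apply, one_div, inv_inv]

theorem contDiffOn_Ioi_comp_one_div {E : Type*} [NormedAddCommGroup E] [NormedSpace ℝ E]
    {n : WithTop ℕ∞} {f : ℝ → E} (hf : ContDiffOn ℝ n f (Ioi 0)) :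
    ContDiffOn ℝ n (fun W ↦ f (1 / W)) (Ioi 0) :=
  hf.comp (contDiffOn_const.div contDiffOn_id fun _ hW ↦ ne_of_gt hW)
    fun _ hW ↦ mem_Ioi.mpr (one_div_pos.mpr hW)

end Inversion

section Rapidity

theorem hasDerivAt_artanh {x : ℝ} (hx : x ∈ Ioo (-1) 1) :
    HasDerivAt artanh (1 - x ^ 2)⁻¹ x := by
  have hadd : 1 + x ≠ 0 := by linarith [hx.1]
  have hsub : 1 - x ≠ 0 := by linarith [hx.2]
  have hsq : 1 - x ^ 2 ≠ 0 := by
    rw [show 1 - x ^ 2 = (1 + x) * (1 - x) by ring]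
    exact mul_ne_zero hadd hsub
  have hlog : HasDerivAt (fun y ↦ 1 / 2 * log ((1 + y) / (1 - y))) (1 - x ^ 2)⁻¹ x := by
    refine (((((hasDerivAt_id x).const_add 1).div ((hasDerivAt_id x).const_sub 1) hsub).log
      (div_ne_zero hadd hsub)).const_mul (1 / 2)).congr_deriv ?_
    simp only [Pi.div_apply, id]
    field_simp
    ring
  refine hlog.congr_of_eventuallyEq ?_
  filter_upwards [Ioo_mem_nhds hx.1 hx.2] with y hy
  exact artanh_eq_half_log (Ioo_subset_Icc_self hy)

theorem exists_tendsto_nhdsGT_of_hasDerivAt_one_sub_sq_mul {w r : ℝ → ℝ} {a b C : ℝ} (hab : a < b)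
    (hmem : ∀ x ∈ Ioo a b, w x ∈ Ioo (-1) 1)
    (hw : ∀ x ∈ Ioo a b, HasDerivAt w ((1 - w x ^ 2) * r x) x)
    (hC : ∀ x ∈ Ioo a b, |r x| ≤ C) :
    ∃ L ∈ Ioo (-1 : ℝ) 1, Tendsto w (𝓝[>] a) (𝓝 L) := by
  have hrapidity : ∀ x ∈ Ioo a b, HasDerivAt (fun y ↦ artanh (w y)) (r x) x := by
    intro x hx
    have hsq : 1 - w x ^ 2 ≠ 0 := by nlinarith [(hmem x hx).1, (hmem x hx).2]
    exact ((hasDerivAt_artanh (hmem x hx)).comp x (hw x hx)).congr_deriv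
      (inv_mul_cancel_left₀ hsq (r x))
  obtain ⟨A, hA⟩ := exists_tendsto_nhdsGT_of_norm_hasDerivAt_le hab hrapidity hC
  refine ⟨tanh A, ⟨neg_one_lt_tanh A, tanh_lt_one A⟩, ?_⟩
  have htanh : Continuous tanh := by
    simp only [funext tanh_eq_sinh_div_cosh]
    exact continuous_sinh.div continuous_cosh fun y ↦ (cosh_pos y).ne'
  refine ((htanh.tendsto A).comp hA).congr' ?_
  filter_upwards [Ioo_mem_nhdsGT hab] with x hx
  exact tanh_artanh (hmem x hx)

end Rapidity

section SelfSimilarODE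

/-- `-W³ Δ_Z(1 / W, x)`, written as a polynomial so that it also makes sense at `W = 0`. -/
def rapidityDenom (ℓ W x : ℝ) : ℝ :=
  ℓ * (1 - x * W) ^ 2 - (W - x) ^ 2

/-- The rate of change in `W = 1 / Z` of the rapidity `artanh x` of the velocity `x` along the
self-similar ODE, so that the velocity itself changes at the rate `(1 - x²)` times this one. -/
noncomputable def rapidityRate (k m ℓ W x : ℝ) : ℝ :=
  (m * (1 - x ^ 2) - k * x * (W - x)) / rapidityDenom ℓ W x

variable {k m ℓ b W x : ℝ} {v : ℝ → ℝ}

theorem rapidityDenom_pos (hℓ : 1 < ℓ) (hW : |W| < 1) (hx : |x| ≤ 1) :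
    0 < rapidityDenom ℓ W x := by
  have hxW : x * W < 1 := (le_abs_self _).trans_lt <| by
    rw [abs_mul]
    exact mul_lt_one_of_nonneg_of_lt_one_right hx (abs_nonneg W) hW
  have hx2 : 0 ≤ 1 - x ^ 2 := sub_nonneg.mpr ((sq_le_one_iff_abs_le_one x).mpr hx)
  have hW2 : 0 ≤ 1 - W ^ 2 := sub_nonneg.mpr ((sq_le_one_iff_abs_le_one W).mpr hW.le)
  calc
    0 < (ℓ - 1) * (1 - x * W) ^ 2 + (1 - x ^ 2) * (1 - W ^ 2) :=
      add_pos_of_pos_of_nonneg (mul_pos (sub_pos.mpr hℓ) (pow_pos (sub_pos.mpr hxW) 2))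
        (mul_nonneg hx2 hW2)
    _ = rapidityDenom ℓ W x := by unfold rapidityDenom; ring

theorem rapidityDenom_pos_of_mem (hℓ : 1 < ℓ) (hb : b < 1) (hW : W ∈ Icc 0 b)
    (hx : x ∈ Icc (-1) 1) : 0 < rapidityDenom ℓ W x :=
  rapidityDenom_pos hℓ ((abs_of_nonneg hW.1).trans_lt (hW.2.trans_lt hb)) (abs_le.mpr hx)

theorem contDiffOn_rapidityRate {n : WithTop ℕ∞} (hℓ : 1 < ℓ) (hb : b < 1) :
    ContDiffOn ℝ n (Function.uncurry (rapidityRate k m ℓ)) (Icc 0 b ×ˢ Icc (-1) 1) := by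
  have hdenom : ContDiff ℝ n (Function.uncurry (rapidityDenom ℓ)) := by
    unfold rapidityDenom Function.uncurry
    fun_prop
  refine ContDiffOn.div ?_ hdenom.contDiffOn
    fun p hp ↦ (rapidityDenom_pos_of_mem hℓ hb hp.1 hp.2).ne'
  fun_prop

theorem exists_abs_rapidityRate_le (k m : ℝ) (hℓ : 1 < ℓ) (hb : b < 1) :
    ∃ C, ∀ W ∈ Icc 0 b, ∀ x ∈ Icc (-1 : ℝ) 1, |rapidityRate k m ℓ W x| ≤ C := by
  obtain ⟨C, hC⟩ := (isCompact_Icc.prod isCompact_Icc).exists_bound_of_continuousOn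
    (contDiffOn_rapidityRate (k := k) (m := m) (n := 0) hℓ hb).continuousOn
  exact ⟨C, fun W hW x hx ↦ hC (W, x) ⟨hW, hx⟩⟩

theorem hasDerivAt_comp_one_div (hW : W ≠ 0) (hdenom : rapidityDenom ℓ W (v (1 / W)) ≠ 0)
    (hv : DifferentiableAt ℝ v (1 / W))
    (hode : DeltaZ ℓ (1 / W) (v (1 / W)) * deriv v (1 / W) = Deltav m k (1 / W) (v (1 / W))) :
    HasDerivAt (fun W ↦ v (1 / W))
      ((1 - v (1 / W) ^ 2) * rapidityRate k m ℓ W (v (1 / W))) W := by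
  have hinv : HasDerivAt (fun W : ℝ ↦ 1 / W) (-(W ^ 2)⁻¹) W := by
    simpa only [one_div] using hasDerivAt_inv hW
  refine (hv.hasDerivAt.comp W hinv).congr_deriv ?_
  unfold rapidityRate
  rw [← mul_div_assoc, eq_div_iff hdenom]
  unfold DeltaZ Deltav at hode
  unfold rapidityDenom
  field_simp at hode ⊢
  linear_combination hode

theorem exists_contDiffOn_Icc_update_of_hasDerivAt_rapidityRate {n : ℕ∞} {w : ℝ → ℝ} (hℓ : 1 < ℓ)
    (hb0 : 0 < b) (hb1 : b < 1) (hmem : MapsTo w (Ioc 0 b) (Ioo (-1) 1))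
    (hw : ∀ W ∈ Ioc 0 b, HasDerivAt w ((1 - w W ^ 2) * rapidityRate k m ℓ W (w W)) W) :
    ∃ L ∈ Ioo (-1 : ℝ) 1, Tendsto w (𝓝[>] 0) (𝓝 L) ∧
      ContDiffOn ℝ n (Function.update w 0 L) (Icc 0 b) := by
  obtain ⟨C, hC⟩ := exists_abs_rapidityRate_le k m hℓ hb1
  have hIoo : Ioo 0 b ⊆ Ioc 0 b := Ioo_subset_Ioc_self
  have hmemIcc : MapsTo w (Ioc 0 b) (Icc (-1) 1) := hmem.mono_right Ioo_subset_Icc_self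
  obtain ⟨L, hL, hlim⟩ := exists_tendsto_nhdsGT_of_hasDerivAt_one_sub_sq_mul hb0
    (hmem.mono_left hIoo) (fun W hW ↦ hw W (hIoo hW))
    fun W hW ↦ hC W (Ioo_subset_Icc_self hW) (w W) (hmemIcc (hIoo hW))
  have hfield : ContDiffOn ℝ n
      (Function.uncurry fun W x ↦ (1 - x ^ 2) * rapidityRate k m ℓ W x)
      (Icc 0 b ×ˢ Icc (-1) 1) :=
    ContDiffOn.mul (by fun_prop) (contDiffOn_rapidityRate hℓ hb1)
  exact ⟨L, hL, hlim, contDiffOn_Icc_update_of_hasDerivAt hb0 hfield hw hmemIcc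
    (Ioo_subset_Icc_self hL) hlim⟩

theorem smooth_at_infinity_general (hℓ : 1 < ℓ) (hv : ContDiffOn ℝ (⊤ : ℕ∞) v (Ioi 0))
    (hbound : ∀ᶠ Z in atTop, |v Z| < 1)
    (hode : ∀ᶠ Z in atTop, DeltaZ ℓ Z (v Z) * deriv v Z = Deltav m k Z (v Z)) :
    ∃ vinf : ℝ, -1 < vinf ∧ vinf < 1 ∧
      Tendsto v atTop (𝓝 vinf) ∧
      ContDiffOn ℝ (⊤ : ℕ∞) (fun W : ℝ => if W = 0 then vinf else v (1 / W)) (Ici 0) := by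
  obtain ⟨b, ⟨hb0, hb1⟩, hb⟩ := exists_forall_Ioc_one_div_of_eventually_atTop (hbound.and hode)
  set w : ℝ → ℝ := fun W ↦ v (1 / W)
  have hmem : MapsTo w (Ioc 0 b) (Ioo (-1) 1) := fun W hW ↦ abs_lt.mp (hb W hW).1
  have hderiv : ∀ W ∈ Ioc 0 b, HasDerivAt w ((1 - w W ^ 2) * rapidityRate k m ℓ W (w W)) W := by
    intro W hW
    have hdenom : 0 < rapidityDenom ℓ W (w W) := rapidityDenom_pos_of_mem hℓ hb1
      (Ioc_subset_Icc_self hW) (Ioo_subset_Icc_self (hmem hW))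
    have hdiff : DifferentiableAt ℝ v (1 / W) :=
      (hv.contDiffAt (Ioi_mem_nhds (one_div_pos.mpr hW.1))).differentiableAt (by simp)
    exact hasDerivAt_comp_one_div hW.1.ne' hdenom.ne' hdiff (hb W hW).2
  obtain ⟨vinf, hvinf, hlim, hIcc⟩ :=
    exists_contDiffOn_Icc_update_of_hasDerivAt_rapidityRate (n := ⊤) hℓ hb0 hb1 hmem hderiv
  have hIoi : ContDiffOn ℝ (⊤ : ℕ∞) (Function.update w 0 vinf) (Ioi 0) :=
    (contDiffOn_Ioi_comp_one_div hv).congr fun W hW ↦ Function.update_of_ne (ne_of_gt hW) vinf w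
  exact ⟨vinf, hvinf.1, hvinf.2, tendsto_atTop_of_tendsto_comp_one_div hlim,
    (contDiffOn_Ici_of_Icc_of_Ioi hb0 hIcc hIoi).congr fun W _ ↦
      (Function.update_apply w 0 vinf W).symm⟩

end SelfSimilarODE

/-- Any globally smooth solution of the self-similar ODE with `|v| < 1` has a limit
`v_∞ ∈ (−1, 1)` at infinity, and `ṽ(W) = v(1/W)` (with `ṽ(0) = v_∞`) is smooth on `[0, ∞)`. -/
theorem smooth_at_infinity (k m ℓ : ℝ) (hk : 0 < k) (hm : 0 < m) (hℓ : 1 < ℓ)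
    (v : ℝ → ℝ)
    (hv : ContDiffOn ℝ (⊤ : ℕ∞) v (Ici 0))
    (hbound : ∀ Z : ℝ, 0 ≤ Z → |v Z| < 1)
    (hode : ∀ Z : ℝ, 0 ≤ Z → DeltaZ ℓ Z (v Z) * deriv v Z = Deltav m k Z (v Z)) :
    ∃ vinf : ℝ, -1 < vinf ∧ vinf < 1 ∧
      Tendsto v atTop (𝓝 vinf) ∧
      ContDiffOn ℝ (⊤ : ℕ∞) (fun W : ℝ => if W = 0 then vinf else v (1 / W)) (Ici 0) :=
  smooth_at_infinity_general hℓ (hv.mono Ioi_subset_Ici_self)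
    ((eventually_ge_atTop 0).mono hbound) ((eventually_ge_atTop 0).mono hode)
end
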